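/- (Corollary 1, rank criterion for the location matrix.) Suppose the probability matrix Q built from the candidate set S has full row rank, Q.rank = c. Then for all positive probability vectors p and g on Fin c, −Σ_{k} (Σ_{j} Q j k · p j) · log (Σ_{j} Q j k · g j) ≥ −Σ_{k} (Σ_{j} Q j k · p j) · log (Σ_{j} Q j k · p j), with equality if and only if g = p; i.e., the true class posterior p is the unique minimiser of the location-based cross-entropy risk over positive probability vectors. -/

import Mathlib

/-!
Pushing a class distribution through `Q` gives the location distributions `a k = ∑ j, Q j k * p j`
and `b k = ∑ j, Q j k * g j`. Both are positive (every position carries some label, since `S` is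
nonempty) and both have total mass `1` (the rows of `Q` sum to `1`), so the risk inequality is Gibbs'
inequality, with equality exactly when `a = b`. Full row rank makes `v ↦ v ᵥ* Q` injective, so
`a = b` forces `p = g`.
-/

/-- One term of Gibbs' inequality; the correction `x - y` cancels on summing over two vectors
of equal mass. -/
lemma mul_log_le_aux {x y : ℝ} (hx : 0 < x) (hy : 0 < y) :
    x * Real.log y ≤ x * Real.log x - (x - y) := by
  have h := Real.log_le_sub_one_of_pos (div_pos hy hx)
  rw [Real.log_div hy.ne' hx.ne'] at h
  have h2 := mul_le_mul_of_nonneg_left h hx.le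
  have h3 : x * (y / x - 1) = y - x := by field_simp
  linarith

lemma mul_log_lt_aux {x y : ℝ} (hx : 0 < x) (hy : 0 < y) (hxy : y ≠ x) :
    x * Real.log y < x * Real.log x - (x - y) := by
  have h := Real.log_lt_sub_one_of_pos (div_pos hy hx) (by rwa [Ne, div_eq_one_iff_eq hx.ne'])
  rw [Real.log_div hy.ne' hx.ne'] at h
  have h2 := mul_lt_mul_of_pos_left h hx
  have h3 : x * (y / x - 1) = y - x := by field_simp
  linarith

/-- Gibbs' inequality for positive vectors of equal total mass. -/
lemma gibbs_le {ι : Type*} [Fintype ι] {a b : ι → ℝ} (ha : ∀ k, 0 < a k) (hb : ∀ k, 0 < b k)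
    (hab : ∑ k, a k = ∑ k, b k) :
    ∑ k, a k * Real.log (b k) ≤ ∑ k, a k * Real.log (a k) := by
  have h := Finset.sum_le_sum fun k (_ : k ∈ Finset.univ) => mul_log_le_aux (ha k) (hb k)
  simp only [Finset.sum_sub_distrib] at h
  linarith

/-- The equality case of Gibbs' inequality. -/
lemma gibbs_eq {ι : Type*} [Fintype ι] {a b : ι → ℝ} (ha : ∀ k, 0 < a k) (hb : ∀ k, 0 < b k)
    (hab : ∑ k, a k = ∑ k, b k)
    (heq : ∑ k, a k * Real.log (b k) = ∑ k, a k * Real.log (a k)) : b = a := by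
  by_contra hne
  obtain ⟨i, hi⟩ := Function.ne_iff.mp hne
  have h := Finset.sum_lt_sum (fun k (_ : k ∈ Finset.univ) => mul_log_le_aux (ha k) (hb k))
    ⟨i, Finset.mem_univ i, mul_log_lt_aux (ha i) (hb i) hi⟩
  simp only [Finset.sum_sub_distrib] at h
  linarith

lemma vecMul_injective_of_rank_eq {c m : ℕ} {Q : Matrix (Fin c) (Fin m) ℝ} (h : Q.rank = c) :
    Function.Injective fun v => Matrix.vecMul v Q := by
  rw [Matrix.vecMul_injective_iff, linearIndependent_iff_card_eq_finrank_span, Set.finrank,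
    ← Matrix.rank_eq_finrank_span_row, h, Fintype.card_fin]

/-- Corollary 1 (rank criterion for the location matrix): if the probability
matrix `Q` built from the candidate set has full row rank, the true class
posterior is the unique minimiser of the location-based cross-entropy risk. -/
theorem stmt_8 (c m : ℕ) (hc : 1 ≤ c) (hm : 1 ≤ m)
    (S : Finset (Fin m → Fin c)) (hS : S.Nonempty)
    (n : Fin c → Fin m → ℕ)
    (hn : ∀ j k, n j k = (S.filter (fun Y => Y k = j)).card)
    (N : Fin c → ℕ) (hN : ∀ j, N j = ∑ k, n j k)
    (hNpos : ∀ j, 0 < N j)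
    (Q : Matrix (Fin c) (Fin m) ℝ)
    (hQ : ∀ j k, Q j k = (n j k : ℝ) / (N j : ℝ))
    (hQ_rank : Q.rank = c)
    (p g : Fin c → ℝ)
    (hp_pos : ∀ j, 0 < p j) (hp_sum : ∑ j, p j = 1)
    (hg_pos : ∀ j, 0 < g j) (hg_sum : ∑ j, g j = 1) :
    (- ∑ k, (∑ j, Q j k * p j) * Real.log (∑ j, Q j k * g j)) ≥
      (- ∑ k, (∑ j, Q j k * p j) * Real.log (∑ j, Q j k * p j)) ∧
    ((- ∑ k, (∑ j, Q j k * p j) * Real.log (∑ j, Q j k * g j)) =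
      (- ∑ k, (∑ j, Q j k * p j) * Real.log (∑ j, Q j k * p j)) ↔ g = p) := by
  have hQ0 : ∀ j k, 0 ≤ Q j k := fun j k => by rw [hQ]; positivity
  have hrow : ∀ j, ∑ k, Q j k = 1 := fun j => by
    have h0 : (N j : ℝ) ≠ 0 := by exact_mod_cast (hNpos j).ne'
    simp_rw [hQ, ← Finset.sum_div]
    rw [div_eq_one_iff_eq h0, hN j, Nat.cast_sum]
  -- The label carried at position `k` by a member of `S` gives a positive entry in column `k`.
  have hcol : ∀ k, ∃ j, 0 < Q j k := fun k => by
    obtain ⟨Y, hY⟩ := hS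
    refine ⟨Y k, ?_⟩
    have h1 : 0 < n (Y k) k := by
      rw [hn]
      exact Finset.card_pos.mpr ⟨Y, by simp [hY]⟩
    have h2 := hNpos (Y k)
    rw [hQ]
    positivity
  have hpos : ∀ v : Fin c → ℝ, (∀ j, 0 < v j) → ∀ k, 0 < ∑ j, Q j k * v j := fun v hv k => by
    obtain ⟨j, hj⟩ := hcol k
    exact Finset.sum_pos' (fun i _ => mul_nonneg (hQ0 i k) (hv i).le)
      ⟨j, Finset.mem_univ j, mul_pos hj (hv j)⟩
  have hmass : ∀ v : Fin c → ℝ, ∑ k, ∑ j, Q j k * v j = ∑ j, v j := fun v => by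
    rw [Finset.sum_comm]
    simp_rw [← Finset.sum_mul, hrow, one_mul]
  have hab : ∑ k, ∑ j, Q j k * p j = ∑ k, ∑ j, Q j k * g j := by
    rw [hmass, hmass, hp_sum, hg_sum]
  refine ⟨neg_le_neg (gibbs_le (hpos p hp_pos) (hpos g hg_pos) hab), fun h => ?_, fun h => by rw [h]⟩
  have hba := gibbs_eq (hpos p hp_pos) (hpos g hg_pos) hab (neg_injective h)
  apply vecMul_injective_of_rank_eq hQ_rank
  funext k
  simpa [Matrix.vecMul, dotProduct, mul_comm] using congrFun hba k
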